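/- Linear Hauptsatz: the cut rule is eliminable from the sequent calculus CLL of classical linear logic, that is, every sequent provable in CLL has a proof in CLL containing no instance of the cut rule. -/

import Mathlib

/-!
The one-sided sequent calculus CLL for classical linear logic, and the
linear Hauptsatz (cut elimination).  Sequents `⊢ Γ` are finite lists of
formulas; in the rules below, `⊢ Γ, P` is encoded as `Γ ++ [P]` and
`⊢ ¬P, Δ` as `P.neg :: Δ`.  The proof predicate carries a flag recording
whether the cut rule may be used.
-/

namespace CLL

/-- Formulas of classical linear logic: atoms `pos a`, negated atoms
`negA a`, units `1`, `⊥`, `0`, `⊤`, multiplicatives `⊗`, `⅋`, additives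
`&`, `⊕`, exponentials `!`, `?`. -/
inductive LF : Type where
  | pos    : ℕ → LF
  | negA   : ℕ → LF
  | one    : LF
  | bot    : LF
  | zero   : LF
  | top    : LF
  | tensor : LF → LF → LF
  | parr   : LF → LF → LF
  | withC  : LF → LF → LF
  | oplus  : LF → LF → LF
  | bang   : LF → LF
  | quest  : LF → LF
deriving DecidableEq

/-- Linear negation, extended to all formulas by the De Morgan laws. -/
def LF.neg : LF → LF
  | .pos a => .negA a
  | .negA a => .pos a
  | .one => .bot
  | .bot => .one
  | .zero => .top
  | .top => .zero
  | .tensor P Q => .parr P.neg Q.neg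
  | .parr P Q => .tensor P.neg Q.neg
  | .withC P Q => .oplus P.neg Q.neg
  | .oplus P Q => .withC P.neg Q.neg
  | .bang P => .quest P.neg
  | .quest P => .bang P.neg

/-- Proofs in CLL of one-sided sequents.  `Proof c Γ` means `⊢ Γ` is provable,
where the cut rule is allowed only when `c = true`. -/
inductive Proof : Bool → List LF → Prop where
  | id (c : Bool) (P : LF) : Proof c [P, P.neg]
  | cut (Γ Δ : List LF) (P : LF) :
      Proof true (Γ ++ [P]) → Proof true (P.neg :: Δ) → Proof true (Γ ++ Δ)
  | perm (c : Bool) (Γ Δ : List LF) (P Q : LF) :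
      Proof c (Γ ++ P :: Q :: Δ) → Proof c (Γ ++ Q :: P :: Δ)
  | one (c : Bool) : Proof c [.one]
  | bot (c : Bool) (Γ : List LF) : Proof c Γ → Proof c (Γ ++ [.bot])
  | tensor (c : Bool) (Γ Δ : List LF) (P Q : LF) :
      Proof c (Γ ++ [P]) → Proof c (Δ ++ [Q]) →
      Proof c (Γ ++ Δ ++ [P.tensor Q])
  | parr (c : Bool) (Γ : List LF) (P Q : LF) :
      Proof c (Γ ++ [P, Q]) → Proof c (Γ ++ [P.parr Q])
  | top (c : Bool) (Γ : List LF) : Proof c (Γ ++ [.top])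
  | withR (c : Bool) (Γ : List LF) (P Q : LF) :
      Proof c (Γ ++ [P]) → Proof c (Γ ++ [Q]) → Proof c (Γ ++ [P.withC Q])
  | oplusL (c : Bool) (Γ : List LF) (P Q : LF) :
      Proof c (Γ ++ [P]) → Proof c (Γ ++ [P.oplus Q])
  | oplusR (c : Bool) (Γ : List LF) (P Q : LF) :
      Proof c (Γ ++ [Q]) → Proof c (Γ ++ [P.oplus Q])
  | promote (c : Bool) (Γ : List LF) (P : LF) :
      Proof c (Γ.map .quest ++ [P]) → Proof c (Γ.map .quest ++ [P.bang])
  | weak (c : Bool) (Γ : List LF) (P : LF) :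
      Proof c Γ → Proof c (Γ ++ [P.quest])
  | derel (c : Bool) (Γ : List LF) (P : LF) :
      Proof c (Γ ++ [P]) → Proof c (Γ ++ [P.quest])
  | contr (c : Bool) (Γ : List LF) (P : LF) :
      Proof c (Γ ++ [P.quest, P.quest]) → Proof c (Γ ++ [P.quest])

/-!
The argument is semantic, in the style of Okada. In a phase space every formula `A` denotes a fact
`⟦A⟧`, with `⟦A.neg⟧ = ⟦A⟧⊥`, and a sequent `A₁, …, Aₙ` is valid when `⟦A₁⟧⊥ + ⋯ + ⟦Aₙ⟧⊥` lies in
the pole. All rules preserve validity; cut does because `⟦P.neg⟧ = ⟦P⟧⊥`. Now take the phase space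
of multisets of formulas whose pole consists of the *cut-free* derivable ones. There `{A} ∈ ⟦A⟧⊥`
for every formula `A`, so validity of `A₁, …, Aₙ` puts the multiset `{A₁, …, Aₙ}` itself in the
pole.
-/

open scoped Pointwise
open Order

/-- A phase space on a commutative monoid, written additively since the monoid of interest is that
of multisets. The exponentials `!` and `?` are interpreted by a submonoid all of whose elements can
be weakened and contracted, that is, belong to `{0}⊥⊥` and satisfy `j ∈ {j + j}⊥⊥`. -/
structure PhaseSpace (M : Type*) [AddCommMonoid M] where
  pole : Set M
  exponentials : AddSubmonoid M
  weaken {j x : M} : j ∈ exponentials → x ∈ pole → j + x ∈ pole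
  contract {j x : M} : j ∈ exponentials → j + j + x ∈ pole → j + x ∈ pole

namespace PhaseSpace

variable {M : Type*} [AddCommMonoid M] (S : PhaseSpace M) {X Y : Set M}

/-- Orthogonality of two elements of a phase space, the relation from which facts are built. -/
def Orthogonal (x y : M) : Prop := x + y ∈ S.pole

/-- The orthogonal `X⊥` of a set. Orthogonality being symmetric, the upper and the lower polar
agree; the facts of the phase space are the sets of the form `X⊥`. -/
def perp (X : Set M) : Set M := upperPolar S.Orthogonal X

theorem lowerPolar_orthogonal (X : Set M) : lowerPolar S.Orthogonal X = S.perp X := by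
  ext x
  simp only [perp, mem_lowerPolar_iff, mem_upperPolar_iff, Orthogonal, add_comm]

variable {S}

theorem mem_perp_singleton {x y : M} : y ∈ S.perp {x} ↔ x + y ∈ S.pole :=
  mem_upperPolar_singleton ..

theorem mem_perp_zero {x : M} : x ∈ S.perp {0} ↔ x ∈ S.pole := by
  rw [mem_perp_singleton, zero_add]

theorem subset_perp_comm : X ⊆ S.perp Y ↔ Y ⊆ S.perp X := by
  rw [← lowerPolar_orthogonal S X]
  exact subset_upperPolar_iff_subset_lowerPolar

theorem subset_perp_perp : X ⊆ S.perp (S.perp X) :=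
  subset_perp_comm.1 subset_rfl

theorem perp_perp_mono (h : X ⊆ Y) : S.perp (S.perp X) ⊆ S.perp (S.perp Y) :=
  upperPolar_anti _ (upperPolar_anti _ h)

variable (S) in
theorem perp_perp_perp (X : Set M) : S.perp (S.perp (S.perp X)) = S.perp X :=
  (upperPolar_anti _ subset_perp_perp).antisymm subset_perp_perp

variable (S) in
theorem perp_union (X Y : Set M) : S.perp (X ∪ Y) = S.perp X ∩ S.perp Y :=
  upperPolar_union ..

theorem add_subset_pole : X + Y ⊆ S.pole ↔ Y ⊆ S.perp X := by
  rw [add_comm, Set.add_subset_iff]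
  simp only [Set.subset_def, perp, mem_upperPolar_iff, Orthogonal, add_comm]

theorem perp_perp_add_subset_pole : S.perp (S.perp X) + Y ⊆ S.pole ↔ X + Y ⊆ S.pole := by
  rw [add_subset_pole, perp_perp_perp, add_subset_pole]

theorem perp_perp_add_subset :
    S.perp (S.perp X) + S.perp (S.perp Y) ⊆ S.perp (S.perp (X + Y)) := by
  have h : X + (Y + S.perp (X + Y)) ⊆ S.pole := by rw [← add_assoc, add_subset_pole]
  rw [← perp_perp_add_subset_pole, add_left_comm, ← perp_perp_add_subset_pole] at h
  rwa [← add_subset_pole, add_comm, add_assoc, add_left_comm]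

theorem sum_perp_perp_subset (L : List (Set M)) :
    (L.map fun X => S.perp (S.perp X)).sum ⊆ S.perp (S.perp L.sum) := by
  induction L with
  | nil => exact subset_perp_perp
  | cons X L ih =>
    rw [List.map_cons, List.sum_cons, List.sum_cons]
    exact (Set.add_subset_add_left ih).trans perp_perp_add_subset

/-! ### Interpretation of formulas and sequents -/

variable (S) (v : ℕ → Set M)

/-- The fact denoted by a formula when the atom `a` denotes the fact generated by `v a`. -/
def interp : LF → Set M
  | .pos a => S.perp (S.perp (v a))
  | .negA a => S.perp (v a)
  | .one => S.perp (S.perp {0})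
  | .bot => S.perp {0}
  | .zero => S.perp Set.univ
  | .top => Set.univ
  | .tensor P Q => S.perp (S.perp (interp P + interp Q))
  | .parr P Q => S.perp (S.perp (interp P) + S.perp (interp Q))
  | .withC P Q => interp P ∩ interp Q
  | .oplus P Q => S.perp (S.perp (interp P ∪ interp Q))
  | .bang P => S.perp (S.perp (interp P ∩ S.exponentials))
  | .quest P => S.perp (S.perp (interp P) ∩ S.exponentials)

theorem isIntent_interp (A : LF) : IsIntent S.Orthogonal (S.interp v A) := by
  induction A with
  | top => exact IsIntent.univ
  | withC P Q ihP ihQ => exact ihP.inter ihQ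
  | _ => exact isIntent_upperPolar

theorem perp_perp_interp (A : LF) : S.perp (S.perp (S.interp v A)) = S.interp v A := by
  rw [← lowerPolar_orthogonal S (S.interp v A)]
  exact (S.isIntent_interp v A).eq

theorem interp_neg (A : LF) : S.interp v A.neg = S.perp (S.interp v A) := by
  induction A with
  | zero => exact (S.perp_perp_interp v .top).symm
  | oplus P Q ihP ihQ => simp only [LF.neg, interp, ihP, ihQ, ← perp_union, perp_perp_perp]
  | _ => simp only [LF.neg, interp, perp_perp_perp, perp_union, perp_perp_interp, *]

/-- The set `⟦A₁⟧⊥ + ⋯ + ⟦Aₙ⟧⊥` of all tests a sequent `A₁, …, Aₙ` has to pass; its orthogonal is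
the fact denoted by `A₁ ⅋ ⋯ ⅋ Aₙ`. -/
def tests (Γ : List LF) : Set M := (Γ.map fun A => S.perp (S.interp v A)).sum

/-- Validity of a sequent in a phase space under a valuation: it passes all its tests. -/
def Valid (Γ : List LF) : Prop := S.tests v Γ ⊆ S.pole

theorem tests_cons (A : LF) (Γ : List LF) :
    S.tests v (A :: Γ) = S.perp (S.interp v A) + S.tests v Γ :=
  List.sum_cons

theorem tests_singleton (A : LF) : S.tests v [A] = S.perp (S.interp v A) :=
  List.sum_singleton

theorem tests_append (Γ Δ : List LF) : S.tests v (Γ ++ Δ) = S.tests v Γ + S.tests v Δ := by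
  simp only [tests, List.map_append, List.sum_append]

variable {S v} {Γ Δ : List LF} {P : LF}

theorem tests_perm (h : Γ.Perm Δ) : S.tests v Γ = S.tests v Δ :=
  (h.map _).sum_eq

theorem valid_cons : S.Valid v (P :: Γ) ↔ S.tests v Γ ⊆ S.interp v P := by
  rw [Valid, tests_cons, add_subset_pole, perp_perp_interp]

theorem valid_concat : S.Valid v (Γ ++ [P]) ↔ S.tests v Γ ⊆ S.interp v P := by
  rw [← valid_cons, Valid, tests_perm (List.perm_append_singleton P Γ), Valid]

/-! ### Soundness -/

theorem Valid.cut (h₁ : S.Valid v (Γ ++ [P])) (h₂ : S.Valid v (P.neg :: Δ)) :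
    S.Valid v (Γ ++ Δ) := by
  rw [valid_concat] at h₁
  rw [valid_cons, interp_neg] at h₂
  rw [Valid, tests_append, add_subset_pole]
  exact h₂.trans (upperPolar_anti _ h₁)

/-- The tests of `?Γ` lie in the biorthogonal of those among them that are exponentials, and the
latter lie in `⟦P⟧ ∩ S.exponentials`, the set generating `⟦!P⟧`. -/
theorem Valid.promote (h : S.Valid v (Γ.map .quest ++ [P])) :
    S.Valid v (Γ.map .quest ++ [P.bang]) := by
  rw [valid_concat] at h ⊢
  let L := Γ.map fun A => S.perp (S.interp v A) ∩ S.exponentials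
  have tests_eq : S.tests v (Γ.map .quest) = (L.map fun X => S.perp (S.perp X)).sum := by
    simp only [tests, L, List.map_map, Function.comp_def, interp]
  have sum_subset_tests : L.sum ⊆ S.tests v (Γ.map .quest) := by
    rw [tests_eq]
    simpa using Set.list_sum_subset_list_sum L id _ fun _ _ => subset_perp_perp
  have sum_subset_exponentials : L.sum ⊆ S.exponentials := by
    refine List.sum_induction (· ⊆ (S.exponentials : Set M))
      (fun _ _ => AddSubmonoid.add_subset)
      (Set.singleton_subset_iff.2 S.exponentials.zero_mem) ?_
    simp [L]
  calc S.tests v (Γ.map .quest)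
    _ = (L.map fun X => S.perp (S.perp X)).sum := tests_eq
    _ ⊆ S.perp (S.perp L.sum) := sum_perp_perp_subset L
    _ ⊆ S.interp v P.bang :=
      perp_perp_mono (Set.subset_inter (sum_subset_tests.trans h) sum_subset_exponentials)

theorem Valid.weak (h : S.Valid v Γ) : S.Valid v (Γ ++ [P.quest]) :=
  valid_concat.2 fun _ hx _ hj => S.weaken hj.2 (h hx)

theorem Valid.contr (h : S.Valid v (Γ ++ [P.quest, P.quest])) : S.Valid v (Γ ++ [P.quest]) := by
  rw [Valid, tests_append, tests_cons, tests_singleton, add_comm] at h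
  refine valid_concat.2 fun x hx j hj => S.contract hj.2 ?_
  have hj' : j ∈ S.perp (S.interp v P.quest) := subset_perp_perp hj
  exact h (Set.add_mem_add (Set.add_mem_add hj' hj') hx)

end PhaseSpace

open PhaseSpace

theorem Proof.valid {M : Type*} [AddCommMonoid M] (S : PhaseSpace M) (v : ℕ → Set M)
    {c : Bool} {Γ : List LF} (h : Proof c Γ) : S.Valid v Γ := by
  induction h with
  | id _ P => exact valid_cons.2 (by rw [tests_singleton, interp_neg, perp_perp_interp])
  | cut _ _ _ _ _ ih₁ ih₂ => exact ih₁.cut ih₂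
  | perm _ Γ Δ P Q _ ih => exact (tests_perm ((List.Perm.swap P Q Δ).append_left Γ)).trans_subset ih
  | one => exact valid_cons.2 subset_perp_perp
  | bot _ Γ _ ih => exact valid_concat.2 fun x hx => mem_perp_zero.2 (ih hx)
  | tensor _ Γ Δ P Q _ _ ih₁ ih₂ =>
    rw [valid_concat] at ih₁ ih₂ ⊢
    rw [tests_append]
    exact (Set.add_subset_add ih₁ ih₂).trans subset_perp_perp
  | parr _ Γ P Q _ ih =>
    rw [Valid, tests_append, tests_cons, tests_singleton, add_comm, add_subset_pole] at ih
    exact valid_concat.2 ih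
  | top => exact valid_concat.2 (Set.subset_univ _)
  | withR _ Γ P Q _ _ ih₁ ih₂ =>
    exact valid_concat.2 (Set.subset_inter (valid_concat.1 ih₁) (valid_concat.1 ih₂))
  | oplusL _ Γ P Q _ ih =>
    exact valid_concat.2 ((valid_concat.1 ih).trans (Set.subset_union_left.trans subset_perp_perp))
  | oplusR _ Γ P Q _ ih =>
    exact valid_concat.2 ((valid_concat.1 ih).trans (Set.subset_union_right.trans subset_perp_perp))
  | promote _ Γ P _ ih => exact ih.promote
  | weak _ Γ P _ ih => exact ih.weak
  | derel _ Γ P _ ih =>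
    exact valid_concat.2 ((valid_concat.1 ih).trans (subset_perp_comm.1 Set.inter_subset_left))
  | contr _ Γ P _ ih => exact ih.contr

/-! ### Derivability of multisets -/

theorem Proof.of_perm {c : Bool} {Γ Δ : List LF} (hp : Γ.Perm Δ) (h : Proof c Γ) : Proof c Δ := by
  -- The induction needs an arbitrary prefix, since `Proof.perm` swaps in the middle of a list.
  suffices H : ∀ Θ, Proof c (Θ ++ Γ) → Proof c (Θ ++ Δ) from H [] h
  clear h
  induction hp with
  | nil => exact fun _ h => h
  | cons A _ ih =>
    intro Θ h
    simpa using ih (Θ ++ [A]) (by simpa using h)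
  | swap A B Γ => exact fun Θ h => Proof.perm c Θ Γ B A h
  | trans _ _ ih₁ ih₂ => exact fun Θ h => ih₂ Θ (ih₁ Θ h)

/-- Derivability of a multiset, any listing of it being provable. Lifting `Proof` to the quotient
makes `Derivable c ↑Γ` definitionally equal to `Proof c Γ`. -/
def Derivable (c : Bool) (m : Multiset LF) : Prop :=
  Quotient.liftOn m (Proof c) fun _ _ hp => propext ⟨.of_perm hp, .of_perm hp.symm⟩

namespace Derivable

variable {c : Bool} {m n : Multiset LF} {P Q : LF}

theorem bot : Derivable c m → Derivable c (m + {.bot}) :=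
  Quotient.inductionOn m fun Γ => Proof.bot c Γ

theorem top : Derivable c (m + {.top}) :=
  Quotient.inductionOn m fun Γ => Proof.top c Γ

theorem tensor :
    Derivable c (m + {P}) → Derivable c (n + {Q}) → Derivable c (m + n + {P.tensor Q}) :=
  Quotient.inductionOn₂ m n fun Γ Δ => Proof.tensor c Γ Δ P Q

theorem parr : Derivable c (m + ({P} + {Q})) → Derivable c (m + {P.parr Q}) :=
  Quotient.inductionOn m fun Γ => Proof.parr c Γ P Q

theorem withR : Derivable c (m + {P}) → Derivable c (m + {Q}) → Derivable c (m + {P.withC Q}) :=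
  Quotient.inductionOn m fun Γ => Proof.withR c Γ P Q

theorem oplusL : Derivable c (m + {P}) → Derivable c (m + {P.oplus Q}) :=
  Quotient.inductionOn m fun Γ => Proof.oplusL c Γ P Q

theorem oplusR : Derivable c (m + {Q}) → Derivable c (m + {P.oplus Q}) :=
  Quotient.inductionOn m fun Γ => Proof.oplusR c Γ P Q

theorem promote :
    Derivable c (m.map .quest + {P}) → Derivable c (m.map .quest + {P.bang}) :=
  Quotient.inductionOn m fun Γ => Proof.promote c Γ P

theorem weak : Derivable c m → Derivable c (m + {P.quest}) :=
  Quotient.inductionOn m fun Γ => Proof.weak c Γ P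

theorem derel : Derivable c (m + {P}) → Derivable c (m + {P.quest}) :=
  Quotient.inductionOn m fun Γ => Proof.derel c Γ P

theorem contr : Derivable c (m + ({P.quest} + {P.quest})) → Derivable c (m + {P.quest}) :=
  Quotient.inductionOn m fun Γ => Proof.contr c Γ P

theorem weak_map (h : Derivable c m) : Derivable c (n.map .quest + m) := by
  induction n using Multiset.induction_on with
  | empty => simpa using h
  | cons P n ih =>
    rw [Multiset.map_cons, Multiset.cons_add, ← Multiset.singleton_add, add_comm]
    exact ih.weak

theorem contr_map (h : Derivable c (n.map .quest + n.map .quest + m)) :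
    Derivable c (n.map .quest + m) := by
  induction n using Multiset.induction_on generalizing m with
  | empty => simpa using h
  | cons P n ih =>
    rw [Multiset.map_cons, ← Multiset.singleton_add] at h ⊢
    have contracted : Derivable c (n.map .quest + n.map .quest + m + {P.quest}) := by
      refine contr ?_
      convert h using 1
      abel
    rw [add_assoc] at contracted
    convert ih contracted using 1
    abel

end Derivable

/-! ### The syntactic phase space -/

/-- The phase space of multisets of formulas, with the derivable ones as pole and the multisets of
`?`-formulas as exponentials. For `c = false` the pole is cut-free derivability. -/
def syntacticPhaseSpace (c : Bool) : PhaseSpace (Multiset LF) where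
  pole := {m | Derivable c m}
  exponentials := AddMonoidHom.mrange (Multiset.mapAddMonoidHom .quest)
  weaken := by
    rintro _ _ ⟨n, rfl⟩ h
    exact h.weak_map
  contract := by
    rintro _ _ ⟨n, rfl⟩ h
    exact h.contr_map

/-- The valuation of the syntactic phase space in which `a` denotes the fact generated by `ā`. -/
def syntacticValuation (a : ℕ) : Set (Multiset LF) := {{.negA a}}

theorem singleton_mem_perp_interp_syntactic (c : Bool) (A : LF) :
    {A} ∈ (syntacticPhaseSpace c).perp ((syntacticPhaseSpace c).interp syntacticValuation A) := by
  induction A with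
  | pos a =>
    rw [interp, perp_perp_perp]
    exact mem_perp_singleton.2 (Proof.id c (.negA a))
  | negA a => exact subset_perp_perp rfl
  | one =>
    rw [interp, perp_perp_perp]
    exact mem_perp_zero.2 (Proof.one c)
  | bot => exact fun m hm => Derivable.bot (mem_perp_zero.1 hm)
  | zero => exact subset_perp_perp trivial
  | top => exact fun m _ => Derivable.top
  | tensor P Q ihP ihQ =>
    rw [interp, perp_perp_perp]
    rintro _ ⟨m, hm, n, hn, rfl⟩
    exact Derivable.tensor (ihP hm) (ihQ hn)
  | parr P Q ihP ihQ =>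
    intro m hm
    have h : {P} + {Q} + m ∈ (syntacticPhaseSpace c).pole := hm (Set.add_mem_add ihP ihQ)
    rw [add_comm] at h
    exact Derivable.parr h
  | withC P Q ihP ihQ => exact fun m hm => Derivable.withR (ihP hm.1) (ihQ hm.2)
  | oplus P Q ihP ihQ =>
    rw [interp, perp_perp_perp]
    rintro m (hm | hm)
    · exact Derivable.oplusL (ihP hm)
    · exact Derivable.oplusR (ihQ hm)
  | bang P ih =>
    rw [interp, perp_perp_perp]
    rintro _ ⟨hm, n, rfl⟩
    exact Derivable.promote (ih hm)
  | quest P ih =>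
    exact subset_perp_perp ⟨fun m hm => Derivable.derel (ih hm), {P}, rfl⟩

theorem coe_mem_tests_syntactic (c : Bool) (Γ : List LF) :
    (Γ : Multiset LF) ∈ (syntacticPhaseSpace c).tests syntacticValuation Γ := by
  induction Γ with
  | nil => rfl
  | cons A Γ ih =>
    rw [tests_cons, ← Multiset.cons_coe, ← Multiset.singleton_add]
    exact Set.add_mem_add (singleton_mem_perp_interp_syntactic c A) ih

theorem Proof.of_valid {c : Bool} {Γ : List LF}
    (h : (syntacticPhaseSpace c).Valid syntacticValuation Γ) : Proof c Γ :=
  h (coe_mem_tests_syntactic c Γ)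

/-- Linear Hauptsatz.
The cut rule is eliminable from CLL: every sequent provable in CLL has a
proof in CLL containing no instance of the cut rule. -/
theorem linear_hauptsatz (Γ : List LF) (h : Proof true Γ) :
    Proof false Γ := by
  exact .of_valid (h.valid (syntacticPhaseSpace false) syntacticValuation)

end CLL
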